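/- Let G_1, G_2 : [L_0, L] → ℝ be twice continuously differentiable functions satisfying G_j'' + 12·y_0·G_j = 0 on [L_0, L] with G_1(L) = 1, G_1'(L) = 0, G_2(L) = 0, G_2'(L) = 1. Then sup_{[L_0,L]} |G_1| ≤ 3.775, sup_{[L_0,L]} |G_1'| ≤ 3.391, sup_{[L_0,L]} |G_2| ≤ 1.114, and sup_{[L_0,L]} |G_2'| ≤ 1. -/

import Mathlib

/-!
Write `q = 12 y₀`. On `[L₀, L]` the function `q` is nonnegative and increasing, because `P_u' ≥ 0`
on `[-1, 1]` and `-1/(x - x₀)²` increases to the right of its pole. Hence, for a solution `G` of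
`G'' + q G = 0`, the energy `E = G'² + q G²` satisfies `E' = q' G² ≥ 0`, so that
`E(x) ≤ E(L) ≤ M²` for all `x`, for any `M ≥ √E(L)`. This has two consequences (`energy_bounds`).

* `|G'| ≤ M` everywhere, since `q ≥ 0`.
* `|G| ≤ M / √q(x)`, which is good as long as `q` is not small. It is used on `[a, L]` with
  `a = -0.16`, where `q ≥ q(a)` gives `|G| ≤ 0.7833 M`. To the left of `a`, the mean value
  inequality with `|G'| ≤ M` adds at most `0.33 M`, for a total of `1.1133 M`. The point `a`
  nearly minimizes `1/√q(a) + (a - L₀)`.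

For `G₂` one takes `M = 1`; for `G₁` one takes `M = 3.3908`, slightly above `√q(L)`.
The margins are thin:
`3.3908 * 1.1133 ≤ 3.775` barely holds.
-/

open Set

noncomputable section

/-- The coefficients `c_0, …, c_22` of the polynomial `P_u`. -/
def cP : ℕ → ℝ
  | 0 => 335867/539062
  | 1 => 419712/989125
  | 2 => -352463/3539236
  | 3 => 60789/1703279
  | 4 => -132842/11825541
  | 5 => 43961/54574472
  | 6 => 39599/12036926
  | 7 => -213665/48625258
  | 8 => 61644/14973337
  | 9 => -107283/33444500
  | 10 => 44761/18892011
  | 11 => -28249/13550715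
  | 12 => 20641/14839893
  | 13 => 13459/92774551
  | 14 => -4992/34838093
  | 15 => -11771/8149937
  | 16 => 24115/27631671
  | 17 => 42106/39550107
  | 18 => -21163/32637441
  | 19 => -9782/15918509
  | 20 => 11581/32652169
  | 21 => 14692/88640147
  | 22 => -12278/123249611
  | _ => 0

/-- The polynomial `P_u(t) = Σ_{k=0}^{22} c_k t^k`. -/
def Pu (t : ℝ) : ℝ := ∑ k ∈ Finset.range 23, cP k * t ^ k

def x₀ : ℝ := -770766/323285
def rP1 : ℝ := 7/10
def LP1 : ℝ := 11/2
def L₀ : ℝ := -49/100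

/-- `τ(x) = (x - (L + x₀ + r)/2)/((L - x₀ - r)/2)`, mapping `[x₀+r, L]` onto `[-1,1]`. -/
def τP1 (x : ℝ) : ℝ := (x - (LP1 + x₀ + rP1) / 2) / ((LP1 - x₀ - rP1) / 2)

/-- `y₀(x) = -1/(x-x₀)² + P_u(τ(x))` on `[x₀+r, L]`. -/
def y₀ (x : ℝ) : ℝ := -1 / (x - x₀) ^ 2 + Pu (τP1 x)

/-- The derivative of `Pu`, as the sum of the termwise derivatives. -/
def PuD (t : ℝ) : ℝ := ∑ k ∈ Finset.range 23, cP k * (k * t ^ (k - 1))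

lemma hasDerivAt_Pu (t : ℝ) : HasDerivAt Pu (PuD t) t := by
  unfold Pu PuD
  exact HasDerivAt.fun_sum fun k _ => (hasDerivAt_pow k t).const_mul (cP k)

/-- `P_u' ≥ 0` on `[-1, 1]`. The terms of degree at least `4` of `P_u'` are small compared with the
cubic part; on `[0, 1]` they contribute at least minus the sum of their negative coefficients, and
on `[-1, 0]` at least minus the sum of the absolute values of their coefficients. -/
lemma PuD_nonneg {t : ℝ} (h₁ : -1 ≤ t) (h₂ : t ≤ 1) : 0 ≤ PuD t := by
  have habs : ∀ k : ℕ, |t ^ k| ≤ 1 := fun k => by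
    rw [abs_pow]
    exact pow_le_one₀ (abs_nonneg t) (abs_le.2 ⟨h₁, h₂⟩)
  have hub : ∀ k : ℕ, t ^ k ≤ 1 := fun k => (abs_le.1 (habs k)).2
  have hlb : ∀ k : ℕ, -1 ≤ t ^ k := fun k => (abs_le.1 (habs k)).1
  simp only [PuD, Finset.sum_range_succ, Finset.sum_range_zero, cP]
  norm_num
  rcases le_total 0 t with ht | ht
  · have hpos : ∀ k : ℕ, 0 ≤ t ^ k := fun k => pow_nonneg ht k
    linarith [hpos 2, hub 3, hpos 4, hpos 5, hub 6, hpos 7, hub 8,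
      hpos 9, hub 10, hpos 11, hpos 12, hub 13, hub 14, hpos 15,
      hpos 16, hub 17, hub 18, hpos 19, hpos 20, hub 21]
  · have hcube : t ^ 3 ≤ 0 := Odd.pow_nonpos (by decide) ht
    linarith [sq_nonneg t, hlb 4, hlb 5, hub 6, hlb 7, hub 8, hlb 9, hub 10,
      hlb 11, hlb 12, hub 13, hub 14, hlb 15, hlb 16, hub 17,
      hub 18, hlb 19, hlb 20, hub 21]

/-- The derivative of `y₀` away from the pole `x₀`. -/
def y₀D (x : ℝ) : ℝ := 2 / (x - x₀) ^ 3 + PuD (τP1 x) / ((LP1 - x₀ - rP1) / 2)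

lemma hasDerivAt_y₀ {x : ℝ} (hx : x - x₀ ≠ 0) : HasDerivAt y₀ (y₀D x) x := by
  have hτ : HasDerivAt τP1 (1 / ((LP1 - x₀ - rP1) / 2)) x :=
    ((hasDerivAt_id x).sub_const _).div_const _
  have hpole : HasDerivAt (fun x : ℝ => -1 / (x - x₀) ^ 2) (2 / (x - x₀) ^ 3) x := by
    have h := (hasDerivAt_const x (-1 : ℝ)).fun_div
      (((hasDerivAt_id x).sub_const x₀).fun_pow 2) (pow_ne_zero 2 hx)
    refine h.congr_deriv ?_
    simp only [id]
    field_simp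
    push_cast
    ring
  have h := hpole.fun_add ((hasDerivAt_Pu (τP1 x)).comp x hτ)
  refine h.congr_deriv ?_
  rw [y₀D]
  ring

lemma sub_x₀_pos {x : ℝ} (hx : x ∈ Icc L₀ LP1) : 0 < x - x₀ := by
  have h := hx.1
  norm_num [L₀, x₀] at h ⊢
  linarith

lemma y₀D_nonneg {x : ℝ} (hx : x ∈ Icc L₀ LP1) : 0 ≤ y₀D x := by
  have hpos := sub_x₀_pos hx
  have hw : (0 : ℝ) < (LP1 - x₀ - rP1) / 2 := by norm_num [LP1, x₀, rP1]
  have hτ₁ : -1 ≤ τP1 x := by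
    rw [τP1, le_div_iff₀ hw]
    have h := hx.1
    norm_num [L₀, LP1, x₀, rP1] at h ⊢
    linarith
  have hτ₂ : τP1 x ≤ 1 := by
    rw [τP1, div_le_iff₀ hw]
    have h := hx.2
    norm_num [LP1, x₀, rP1] at h ⊢
    linarith
  have := PuD_nonneg hτ₁ hτ₂
  unfold y₀D
  positivity

lemma y₀_monotoneOn : MonotoneOn y₀ (Icc L₀ LP1) := by
  refine monotoneOn_of_hasDerivWithinAt_nonneg (convex_Icc _ _)
    (fun x hx => (hasDerivAt_y₀ (sub_x₀_pos hx).ne').continuousAt.continuousWithinAt)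
    (fun x hx => (hasDerivAt_y₀ (sub_x₀_pos (interior_subset hx)).ne').hasDerivWithinAt)
    (fun x hx => y₀D_nonneg (interior_subset hx))

lemma y₀_left_nonneg : 0 ≤ y₀ L₀ := by
  norm_num [y₀, Pu, Finset.sum_range_succ, cP, τP1, L₀, LP1, x₀, rP1]

/-- The value at the splitting point `a = -0.16`: `1/√q(a) ≤ 0.7833`. -/
lemma y₀_split : 1 ≤ 0.7833 ^ 2 * (12 * y₀ (-0.16)) := by
  norm_num [y₀, Pu, Finset.sum_range_succ, cP, τP1, LP1, x₀, rP1]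

lemma y₀_right : 12 * y₀ LP1 ≤ 3.3908 ^ 2 := by
  norm_num [y₀, Pu, Finset.sum_range_succ, cP, τP1, LP1, x₀, rP1]

/-- A solution of `G'' + 12 y₀ G = 0` whose energy `G'² + 12 y₀ G²` at `L` is at most `M²` satisfies
`|G'| ≤ M` and `|G| ≤ 1.1133 M` on `[L₀, L]`. -/
lemma energy_bounds {G Gd Gdd : ℝ → ℝ} {M : ℝ} (hM : 0 ≤ M)
    (hG : ∀ x ∈ Icc L₀ LP1, HasDerivWithinAt G (Gd x) (Icc L₀ LP1) x)
    (hGd : ∀ x ∈ Icc L₀ LP1, HasDerivWithinAt Gd (Gdd x) (Icc L₀ LP1) x)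
    (hode : ∀ x ∈ Icc L₀ LP1, Gdd x + 12 * y₀ x * G x = 0)
    (hE : Gd LP1 ^ 2 + 12 * y₀ LP1 * G LP1 ^ 2 ≤ M ^ 2) :
    ∀ x ∈ Icc L₀ LP1, |G x| ≤ 1.1133 * M ∧ |Gd x| ≤ M := by
  have hle : L₀ ≤ LP1 := by norm_num [L₀, LP1]
  have hL₀ : L₀ ∈ Icc L₀ LP1 := left_mem_Icc.2 hle
  have hL : LP1 ∈ Icc L₀ LP1 := right_mem_Icc.2 hle
  have ha : (-0.16 : ℝ) ∈ Icc L₀ LP1 := by constructor <;> norm_num [L₀, LP1]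
  have hq : ∀ x ∈ Icc L₀ LP1, 0 ≤ y₀ x := fun x hx =>
    y₀_left_nonneg.trans (y₀_monotoneOn hL₀ hx hx.1)
  have hderiv : ∀ x ∈ Icc L₀ LP1, HasDerivWithinAt (fun x => Gd x ^ 2 + 12 * y₀ x * G x ^ 2)
      (12 * y₀D x * G x ^ 2) (Icc L₀ LP1) x := by
    intro x hx
    have h := ((hGd x hx).fun_pow 2).fun_add
      ((((hasDerivAt_y₀ (sub_x₀_pos hx).ne').hasDerivWithinAt (s := Icc L₀ LP1)).const_mul
        (12 : ℝ)).fun_mul ((hG x hx).fun_pow 2))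
    refine h.congr_deriv ?_
    push_cast
    linear_combination 2 * Gd x * hode x hx
  have hmono : MonotoneOn (fun x => Gd x ^ 2 + 12 * y₀ x * G x ^ 2) (Icc L₀ LP1) := by
    refine monotoneOn_of_hasDerivWithinAt_nonneg (convex_Icc _ _)
      (fun x hx => (hderiv x hx).continuousWithinAt)
      (fun x hx => (hderiv x (interior_subset hx)).mono interior_subset) (fun x hx => ?_)
    have := y₀D_nonneg (interior_subset hx)
    positivity
  have hEx : ∀ x ∈ Icc L₀ LP1, Gd x ^ 2 + 12 * y₀ x * G x ^ 2 ≤ M ^ 2 := fun x hx =>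
    (hmono hx hL hx.2).trans hE
  have hGdM : ∀ x ∈ Icc L₀ LP1, |Gd x| ≤ M := by
    intro x hx
    have h₁ := hEx x hx
    have h₂ : 0 ≤ 12 * y₀ x * G x ^ 2 := by
      have := hq x hx
      positivity
    exact abs_le_of_sq_le_sq (by linarith) hM
  have hright : ∀ x ∈ Icc L₀ LP1, -0.16 ≤ x → |G x| ≤ 0.7833 * M := by
    intro x hx hax
    have hy := y₀_monotoneOn ha hx hax
    have h₁ : 1 ≤ 0.7833 ^ 2 * (12 * y₀ x) := y₀_split.trans (by linarith)
    have h₂ := mul_le_mul_of_nonneg_right h₁ (sq_nonneg (G x))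
    have h₃ := hEx x hx
    have h₄ := sq_nonneg (Gd x)
    refine abs_le_of_sq_le_sq ?_ (by positivity)
    nlinarith
  intro x hx
  refine ⟨?_, hGdM x hx⟩
  rcases le_total (-0.16) x with hax | hax
  · exact (hright x hx hax).trans (by linarith)
  · have hmv := (convex_Icc L₀ LP1).norm_image_sub_le_of_norm_hasDerivWithin_le hG
      (fun y hy => hGdM y hy) ha hx
    have hGa := hright _ ha le_rfl
    have hdist : ‖x - -0.16‖ ≤ 0.33 := by
      have h := hx.1
      norm_num [L₀] at h
      rw [Real.norm_eq_abs, abs_le]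
      constructor <;> linarith
    have hinc : |G x - G (-0.16)| ≤ M * 0.33 :=
      hmv.trans (mul_le_mul_of_nonneg_left hdist hM)
    have htri : |G x| ≤ |G (-0.16)| + |G x - G (-0.16)| := by
      simpa using abs_add_le (G (-0.16)) (G x - G (-0.16))
    linarith

/-- If `G₁, G₂` are `C²` solutions of `G'' + 12 y₀ G = 0` on `[L₀, L]`
with `G₁(L)=1, G₁'(L)=0, G₂(L)=0, G₂'(L)=1`, then `|G₁| ≤ 3.775`, `|G₁'| ≤ 3.391`,
`|G₂| ≤ 1.114` and `|G₂'| ≤ 1` on `[L₀, L]`. -/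
theorem statement10 (G₁ G₁d G₁dd G₂ G₂d G₂dd : ℝ → ℝ)
    (hG₁ : ∀ x ∈ Icc L₀ LP1, HasDerivWithinAt G₁ (G₁d x) (Icc L₀ LP1) x)
    (hG₁d : ∀ x ∈ Icc L₀ LP1, HasDerivWithinAt G₁d (G₁dd x) (Icc L₀ LP1) x)
    (hG₁dd : ContinuousOn G₁dd (Icc L₀ LP1))
    (hode₁ : ∀ x ∈ Icc L₀ LP1, G₁dd x + 12 * y₀ x * G₁ x = 0)
    (hG₂ : ∀ x ∈ Icc L₀ LP1, HasDerivWithinAt G₂ (G₂d x) (Icc L₀ LP1) x)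
    (hG₂d : ∀ x ∈ Icc L₀ LP1, HasDerivWithinAt G₂d (G₂dd x) (Icc L₀ LP1) x)
    (hG₂dd : ContinuousOn G₂dd (Icc L₀ LP1))
    (hode₂ : ∀ x ∈ Icc L₀ LP1, G₂dd x + 12 * y₀ x * G₂ x = 0)
    (hic₁ : G₁ LP1 = 1) (hic₁d : G₁d LP1 = 0)
    (hic₂ : G₂ LP1 = 0) (hic₂d : G₂d LP1 = 1) :
    ∀ x ∈ Icc L₀ LP1,
      |G₁ x| ≤ 3.775 ∧ |G₁d x| ≤ 3.391 ∧ |G₂ x| ≤ 1.114 ∧ |G₂d x| ≤ 1 := by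
  intro x hx
  obtain ⟨h₁, h₁d⟩ := energy_bounds (M := 3.3908) (by norm_num) hG₁ hG₁d hode₁
    (by rw [hic₁, hic₁d]; linarith [y₀_right]) x hx
  obtain ⟨h₂, h₂d⟩ := energy_bounds (M := 1) (by norm_num) hG₂ hG₂d hode₂
    (by rw [hic₂, hic₂d]; norm_num) x hx
  exact ⟨h₁.trans (by norm_num), h₁d.trans (by norm_num), h₂.trans (by norm_num), h₂d⟩

end
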